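/- Let r_{ij} > 0 for all 1 ≤ i,j ≤ d with r_{ii} = 1, d ≥ 2, and let l(θ) = Σ_{1 ≤ i,j ≤ d} (θ_i − r_{ij} θ_j)². If ξ minimizes l over the unit sphere, then no component of ξ is zero: ξ_i ≠ 0 for all i. -/

import Mathlib

open Finset

/-!
Expanding the squares, `l(θ) = θᵀ A θ` for a symmetric matrix `A` whose off-diagonal entries
`-(r i j + r j i)` are negative. Replacing `θ` by `|θ|` does not increase such a form, so with `ξ`
also `|ξ|` is a minimizer on the sphere, hence an eigenvector of `A`. If `ξ k = 0`, row `k` of the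
eigenvalue equation reads `∑ j ≠ k, A k j * |ξ j| = 0`; all its terms are nonpositive, so `ξ = 0`.
-/

open Matrix

variable {ι R : Type*} [Fintype ι]

theorem abs_dotProduct_abs_self [Ring R] [LinearOrder R] (v : ι → R) : |v| ⬝ᵥ |v| = v ⬝ᵥ v := by
  simp only [dotProduct, Pi.abs_apply, abs_mul_abs_self]

theorem abs_dotProduct_mulVec_abs_le [CommRing R] [LinearOrder R] [IsOrderedRing R]
    {A : Matrix ι ι R} (hA : ∀ i j, i ≠ j → A i j ≤ 0) (v : ι → R) :
    |v| ⬝ᵥ A *ᵥ |v| ≤ v ⬝ᵥ A *ᵥ v := by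
  simp only [dotProduct, mulVec, mul_sum, Pi.abs_apply, mul_left_comm _ (A _ _)]
  refine sum_le_sum fun i _ ↦ sum_le_sum fun j _ ↦ ?_
  rcases eq_or_ne i j with rfl | hij
  · rw [abs_mul_abs_self]
  · rw [← abs_mul]
    exact mul_le_mul_of_nonpos_left (le_abs_self _) (hA i j hij)

theorem eq_zero_of_mulVec_apply_eq_zero [Ring R] [LinearOrder R] [IsStrictOrderedRing R]
    {A : Matrix ι ι R} {k : ι} (hA : ∀ j, k ≠ j → A k j < 0) {v : ι → R}
    (hv : 0 ≤ v) (hvk : v k = 0) (hAv : (A *ᵥ v) k = 0) : v = 0 := by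
  have hterm : ∀ j ∈ univ, A k j * v j ≤ 0 := fun j _ ↦ by
    rcases eq_or_ne k j with rfl | hkj
    · simp [hvk]
    · exact mul_nonpos_of_nonpos_of_nonneg (hA j hkj).le (hv j)
  have hzero := (sum_eq_zero_iff_of_nonpos hterm).mp hAv
  ext j
  rcases eq_or_ne k j with rfl | hkj
  · exact hvk
  · exact (mul_eq_zero.mp (hzero j (mem_univ j))).resolve_left (hA j hkj).ne

section SphereMinimizer

variable {A : Matrix ι ι ℝ} {ξ : ι → ℝ}

theorem exists_mulVec_eq_smul_of_isMinOn (hA : A.IsSymm)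
    (hξ : IsMinOn (fun θ ↦ θ ⬝ᵥ A *ᵥ θ) {θ | θ ⬝ᵥ θ = ξ ⬝ᵥ ξ} ξ) :
    ∃ μ : ℝ, A *ᵥ ξ = μ • ξ := by
  classical
  let T := toEuclideanCLM (n := ι) (𝕜 := ℝ) A
  have hT : IsSelfAdjoint T := (isHermitian_iff_isSymm.mpr hA).isSelfAdjoint.map _
  have hform (x : EuclideanSpace ℝ ι) : T.reApplyInnerSelf x = x.ofLp ⬝ᵥ A *ᵥ x.ofLp := by
    rw [← inner_toEuclideanCLM, real_inner_comm]
    rfl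
  have hnorm (x : EuclideanSpace ℝ ι) : ‖x‖ ^ 2 = x.ofLp ⬝ᵥ x.ofLp := by
    simp only [EuclideanSpace.real_norm_sq_eq, dotProduct, ← sq]
  have hmin : IsMinOn T.reApplyInnerSelf (Metric.sphere 0 ‖WithLp.toLp 2 ξ‖) (WithLp.toLp 2 ξ) := by
    intro x hx
    simp only [Set.mem_ofPred_eq, hform]
    refine hξ ?_
    rw [Set.mem_ofPred_eq, ← hnorm, mem_sphere_zero_iff_norm.mp hx, hnorm]
  exact ⟨_, congrArg WithLp.ofLp (hT.eq_smul_self_of_isLocalExtrOn_real (.inl hmin.localize))⟩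

theorem isMinOn_dotProduct_mulVec_abs (hA : ∀ i j, i ≠ j → A i j ≤ 0)
    (hξ : IsMinOn (fun θ ↦ θ ⬝ᵥ A *ᵥ θ) {θ | θ ⬝ᵥ θ = ξ ⬝ᵥ ξ} ξ) :
    IsMinOn (fun θ ↦ θ ⬝ᵥ A *ᵥ θ) {θ | θ ⬝ᵥ θ = |ξ| ⬝ᵥ |ξ|} |ξ| := by
  rw [abs_dotProduct_abs_self]
  exact fun θ hθ ↦ (abs_dotProduct_mulVec_abs_le hA ξ).trans (hξ hθ)

theorem apply_ne_zero_of_isMinOn_dotProduct_mulVec (hA : A.IsSymm)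
    (hneg : ∀ i j, i ≠ j → A i j < 0) (hξ₀ : ξ ≠ 0)
    (hξ : IsMinOn (fun θ ↦ θ ⬝ᵥ A *ᵥ θ) {θ | θ ⬝ᵥ θ = ξ ⬝ᵥ ξ} ξ) (k : ι) : ξ k ≠ 0 := by
  intro hk
  have habs_min := isMinOn_dotProduct_mulVec_abs (fun i j hij ↦ (hneg i j hij).le) hξ
  obtain ⟨μ, hμ⟩ := exists_mulVec_eq_smul_of_isMinOn hA habs_min
  have hAk : (A *ᵥ |ξ|) k = 0 := by simp [hμ, hk]
  have habs : |ξ| = 0 :=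
    eq_zero_of_mulVec_apply_eq_zero (hneg k) (abs_nonneg ξ) (by simp [hk]) hAk
  exact hξ₀ (funext fun i ↦ abs_eq_zero.mp (congrFun habs i))

end SphereMinimizer

section RatioPenalty

variable [DecidableEq ι] [CommRing R]

/-- The symmetric matrix of the ratio-penalization form `l(θ) = ∑ i, ∑ j, (θ i - r i j * θ j) ^ 2`.
The first summand collects the pure squares, the second the cross terms `-2 * r i j * θ i * θ j`,
including those with `i = j`. -/
def ratioPenaltyMatrix (r : ι → ι → R) : Matrix ι ι R :=
  diagonal (fun i ↦ ∑ j, (1 + r j i ^ 2)) - (of r + (of r)ᵀ)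

theorem ratioPenaltyMatrix_isSymm (r : ι → ι → R) : (ratioPenaltyMatrix r).IsSymm :=
  (isSymm_diagonal _).sub (isSymm_add_transpose_self (of r))

theorem ratioPenaltyMatrix_apply_of_ne (r : ι → ι → R) {i j : ι} (hij : i ≠ j) :
    ratioPenaltyMatrix r i j = -(r i j + r j i) := by
  simp [ratioPenaltyMatrix, hij]

theorem dotProduct_ratioPenaltyMatrix_mulVec (r : ι → ι → R) (θ : ι → R) :
    θ ⬝ᵥ ratioPenaltyMatrix r *ᵥ θ = ∑ i, ∑ j, (θ i - r i j * θ j) ^ 2 := by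
  have hdiag : θ ⬝ᵥ diagonal (fun i ↦ ∑ j, (1 + r j i ^ 2)) *ᵥ θ =
      ∑ i, ∑ j, (θ i ^ 2 + r i j ^ 2 * θ j ^ 2) := by
    simp only [sum_add_distrib (ι := ι), dotProduct, mulVec_diagonal]
    rw [sum_comm (f := fun i j ↦ r i j ^ 2 * θ j ^ 2), ← sum_add_distrib]
    refine sum_congr rfl fun i _ ↦ ?_
    rw [← sum_mul, sum_const, sum_const, nsmul_eq_mul, nsmul_eq_mul]
    ring
  have hr : θ ⬝ᵥ of r *ᵥ θ = ∑ i, ∑ j, r i j * (θ i * θ j) := by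
    simp only [dotProduct, mulVec, of_apply, mul_sum, mul_left_comm]
  have hrT : θ ⬝ᵥ (of r)ᵀ *ᵥ θ = θ ⬝ᵥ of r *ᵥ θ := by
    rw [mulVec_transpose, dotProduct_comm, dotProduct_mulVec]
  rw [ratioPenaltyMatrix, sub_mulVec, add_mulVec, dotProduct_sub, dotProduct_add, hrT, hdiag, hr]
  simp only [← sum_add_distrib, ← sum_sub_distrib]
  exact sum_congr rfl fun i _ ↦ sum_congr rfl fun j _ ↦ by ring

end RatioPenalty

theorem minimizer_no_zero_component_general (r : ι → ι → ℝ)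
    (hr : ∀ i j, i ≠ j → 0 < r i j + r j i) (ξ : ι → ℝ) (hξ : ∑ i, ξ i ^ 2 = 1)
    (hmin : ∀ θ : ι → ℝ, ∑ i, θ i ^ 2 = 1 →
      ∑ i, ∑ j, (ξ i - r i j * ξ j) ^ 2 ≤ ∑ i, ∑ j, (θ i - r i j * θ j) ^ 2) :
    ∀ i, ξ i ≠ 0 := by
  classical
  have hneg (i j : ι) (hij : i ≠ j) : ratioPenaltyMatrix r i j < 0 := by
    rw [ratioPenaltyMatrix_apply_of_ne r hij]
    exact neg_neg_of_pos (hr i j hij)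
  have hξ₀ : ξ ≠ 0 := by
    rintro rfl
    simp at hξ
  refine apply_ne_zero_of_isMinOn_dotProduct_mulVec (ratioPenaltyMatrix_isSymm r) hneg hξ₀
    fun θ hθ ↦ ?_
  have hθ_unit : ∑ i, θ i ^ 2 = 1 := by
    simpa only [Set.mem_ofPred_eq, dotProduct, ← sq, hξ] using hθ
  simpa only [Set.mem_ofPred_eq, dotProduct_ratioPenaltyMatrix_mulVec] using hmin θ hθ_unit

/-- If `d ≥ 2` and `ξ` minimizes `l(θ) = Σ_{i,j} (θ i − r i j · θ j)²` over the
unit sphere, then no component of `ξ` vanishes. -/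
theorem minimizer_no_zero_component (d : ℕ) (hd : 2 ≤ d) (r : Fin d → Fin d → ℝ)
    (hr : ∀ i j, 0 < r i j) (hrd : ∀ i, r i i = 1)
    (ξ : Fin d → ℝ) (hξ : ∑ i, ξ i ^ 2 = 1)
    (hmin : ∀ θ : Fin d → ℝ, ∑ i, θ i ^ 2 = 1 →
      ∑ i, ∑ j, (ξ i - r i j * ξ j) ^ 2 ≤ ∑ i, ∑ j, (θ i - r i j * θ j) ^ 2) :
    ∀ i, ξ i ≠ 0 :=
  minimizer_no_zero_component_general r (fun i j _ ↦ add_pos (hr i j) (hr j i)) ξ hξ hmin
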